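/- arXiv:0803.3499 — 2 statements merged into one kernel-verified Lean document; each statement's English description precedes it below -/
import Mathlib

section
/- Let d≥1, 0<c₁≤c₂, ρ:ℝ×ℝ^d→ℝ measurable with c₁ ≤ ρ ≤ c₂, and f:ℝ×ℝ^d×ℝ→ℝ bounded measurable. Let ρ⁺,ρ⁻:ℝ^d→ℝ with ρ^± ≥ c₁, (ρf)⁺,(ρf)⁻:ℝ^d×ℝ→ℝ, and measurable bounded α:ℝ×ℝ^d→ℝ, β₀:ℝ×ℝ^d×ℝ→ℝ such that for all x₁≠0: (1/x₁)∫₀^{x₁} ρ(t,x₂)dt − ρ^±(x₁,x₂) = (1+|x₂|²)α(x₁,x₂) and (1/x₁)∫₀^{x₁} ρ(t,x₂)f(t,x₂,y)dt − (ρf)^±(x₁,x₂,y) = (1+|x₂|²+|y|²)β₀(x₁,x₂,y). Set f̄ := (ρf)^±/ρ^±, and for ε>0 define the corrector V^ε(x₁,x₂,y) := ∫₀^{x₁} ∫₀^s ρ(t/ε,x₂)[f(t/ε,x₂,y) − f̄(t,x₂,y)]dt ds. Define β̃(z,x₂,y) := z^{−2}∫₀^z t β₀(t,x₂,y)dt and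 α̃(z,x₂) := z^{−2}∫₀^z t α(t,x₂)dt for z≠0 (value 0 at z=0). Then for all ε>0 and x₁≠0: V^ε(x₁,x₂,y) = x₁²(1+|x₂|²+|y|²)β̃(x₁/ε,x₂,y) − x₁²(1+|x₂|²) f̄(x₁,x₂,y) α̃(x₁/ε,x₂). Moreover, if lim_{|z|→∞} sup_{x₂}|α(z,x₂)| = 0 and lim_{|z|→∞} sup_{(x₂,y)}|β₀(z,x₂,y)| = 0, then β̃ and α̃ are bounded and satisfy lim_{|z|→∞} sup_{x₂}|α̃(z,x₂)| = 0 and lim_{|z|→∞} sup_{(x₂,y)}|β̃(z,x₂,y)| = 0. -/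
open MeasureTheory Filter Topology

/-- The piecewise function `g^±(x₁,·) = g⁺(·)` for `x₁ > 0` and `g⁻(·)` for `x₁ ≤ 0`. -/
noncomputable def pmFun {E G : Type*} (gp gm : E → G) (x₁ : ℝ) (x₂ : E) : G :=
  if 0 < x₁ then gp x₂ else gm x₂

/-- The averaged nonlinearity `f̄(x₁,x₂,y) = (ρf)^±(x₁,x₂,y) / ρ^±(x₁,x₂)`. -/
noncomputable def fbar {E : Type*} (ρp ρm : E → ℝ) (ρfp ρfm : E → ℝ → ℝ)
    (x₁ : ℝ) (x₂ : E) (y : ℝ) : ℝ :=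
  pmFun ρfp ρfm x₁ x₂ y / pmFun ρp ρm x₁ x₂

theorem aux_ii (g : ℝ → ℝ) (hg : Measurable g) (C : ℝ) (hC : ∀ t, |g t| ≤ C) (a b : ℝ) :
    IntervalIntegrable g volume a b := by
  refine (intervalIntegrable_const (c := C) (μ := volume) (a := a) (b := b)).mono_fun
    hg.aestronglyMeasurable ?_
  refine Filter.Eventually.of_forall fun t => ?_
  change |g t| ≤ |C|
  exact (hC t).trans (le_abs_self C)

theorem aux_mem {z t : ℝ} (ht : t ∈ Set.uIoc 0 z) : |t| ≤ |z| := by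
  rcases Set.mem_uIoc.1 ht with ⟨h1, h2⟩ | ⟨h1, h2⟩
  · rw [abs_of_pos h1]; exact h2.trans (le_abs_self z)
  · rw [abs_of_nonpos h2, abs_of_neg (by linarith)]; linarith

theorem aux_avg (g : ℝ → ℝ) (z K : ℝ) (hz : z ≠ 0)
    (h : ∀ t, |t| ≤ |z| → |t * g t| ≤ K * |z|) :
    |(z ^ 2)⁻¹ * ∫ t in (0:ℝ)..z, t * g t| ≤ K := by
  have h1 := intervalIntegral.norm_integral_le_of_norm_le_const
    (f := fun t => t * g t) (a := 0) (b := z) (C := K * |z|) (fun t ht => h t (aux_mem ht))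
  rw [Real.norm_eq_abs, sub_zero] at h1
  have hz2 : 0 < z ^ 2 := by positivity
  rw [abs_mul, abs_inv, abs_of_pos hz2, inv_mul_le_iff₀ hz2]
  calc _ ≤ _ := h1
    _ = |z| ^ 2 * K := by ring
    _ = _ := by rw [sq_abs]

theorem aux_bd (g : ℝ → ℝ) (C : ℝ) (hC : ∀ t, |g t| ≤ C) (z : ℝ) (hz : z ≠ 0) :
    |(z ^ 2)⁻¹ * ∫ t in (0:ℝ)..z, t * g t| ≤ C := by
  refine aux_avg g z C hz fun t ht => ?_
  rw [abs_mul, mul_comm]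
  exact mul_le_mul (hC t) ht (abs_nonneg _) ((abs_nonneg _).trans (hC t))

theorem aux_decay (C δ R : ℝ) (hδ : 0 < δ) : ∃ R' : ℝ, ∀ g : ℝ → ℝ, (∀ t, |g t| ≤ C) →
    (∀ t, R ≤ |t| → |g t| ≤ δ / 2) → ∀ z : ℝ, R' ≤ |z| → z ≠ 0 ∧
    |(z ^ 2)⁻¹ * ∫ t in (0:ℝ)..z, t * g t| ≤ δ := by
  refine ⟨max 1 (2 * (|C| * |R|) / δ), fun g hC hR z hz => ?_⟩
  have h1 : 1 ≤ |z| := (le_max_left _ _).trans hz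
  have h2 : 2 * (|C| * |R|) / δ ≤ |z| := (le_max_right _ _).trans hz
  rw [div_le_iff₀ hδ] at h2
  have hz0 : z ≠ 0 := by
    rintro rfl
    simp at h1
    linarith
  refine ⟨hz0, aux_avg g z δ hz0 fun t ht => ?_⟩
  rw [abs_mul]
  have hCR : 0 ≤ |C| * |R| := by positivity
  rcases le_total R |t| with h | h
  · have := mul_le_mul ht (hR t h) (abs_nonneg _) (abs_nonneg z)
    nlinarith [abs_nonneg z]
  · have := mul_le_mul (h.trans (le_abs_self R)) ((hC t).trans (le_abs_self C)) (abs_nonneg _)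
      (abs_nonneg R)
    nlinarith [abs_nonneg z]

theorem aux_scale (g : ℝ → ℝ) (ε x : ℝ) (hε : 0 < ε) (hx : x ≠ 0) :
    ∫ s in (0:ℝ)..x, s * g (s / ε)
      = x ^ 2 * (((x / ε) ^ 2)⁻¹ * ∫ t in (0:ℝ)..(x / ε), t * g t) := by
  have h := intervalIntegral.integral_comp_div (a := 0) (b := x) (c := ε)
    (fun t => t * g t) hε.ne'
  have h2 : ∫ s in (0:ℝ)..x, s * g (s / ε) = ε * ∫ s in (0:ℝ)..x, s / ε * g (s / ε) := by
    rw [← intervalIntegral.integral_const_mul]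
    congr 1
    ext s
    field_simp
  rw [h2, h, zero_div, smul_eq_mul]
  field_simp

theorem pm_congr {E G : Type*} (gp gm : E → G) {s t : ℝ} (h : 0 < s ↔ 0 < t) (x : E) :
    pmFun gp gm s x = pmFun gp gm t x := by
  simp only [pmFun, h]

theorem aux_sign {s t : ℝ} (ht : t ∈ Set.uIoc 0 s) : 0 < t ↔ 0 < s := by
  rcases Set.mem_uIoc.1 ht with ⟨h1, h2⟩ | ⟨h1, h2⟩
  · exact ⟨fun _ => by linarith, fun _ => h1⟩
  · exact ⟨fun _ => by linarith, fun _ => by linarith⟩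

theorem stmt_5 (d : ℕ) (hd : 1 ≤ d) (c₁ c₂ : ℝ) (hc₁ : 0 < c₁) (hc₁₂ : c₁ ≤ c₂)
    (ρ : ℝ → EuclideanSpace ℝ (Fin d) → ℝ)
    (hρmeas : Measurable fun p : ℝ × EuclideanSpace ℝ (Fin d) => ρ p.1 p.2)
    (hρbd : ∀ t x₂, c₁ ≤ ρ t x₂ ∧ ρ t x₂ ≤ c₂)
    (f : ℝ → EuclideanSpace ℝ (Fin d) → ℝ → ℝ)
    (hfmeas : Measurable fun p : ℝ × EuclideanSpace ℝ (Fin d) × ℝ => f p.1 p.2.1 p.2.2)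
    (hfbd : ∃ Cf : ℝ, ∀ t x₂ y, |f t x₂ y| ≤ Cf)
    (ρp ρm : EuclideanSpace ℝ (Fin d) → ℝ)
    (hρp : ∀ x₂, c₁ ≤ ρp x₂) (hρm : ∀ x₂, c₁ ≤ ρm x₂)
    (ρfp ρfm : EuclideanSpace ℝ (Fin d) → ℝ → ℝ)
    (α : ℝ → EuclideanSpace ℝ (Fin d) → ℝ)
    (hαmeas : Measurable fun p : ℝ × EuclideanSpace ℝ (Fin d) => α p.1 p.2)
    (hαbd : ∃ Cα : ℝ, ∀ z x₂, |α z x₂| ≤ Cα)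
    (β₀ : ℝ → EuclideanSpace ℝ (Fin d) → ℝ → ℝ)
    (hβ₀meas : Measurable fun p : ℝ × EuclideanSpace ℝ (Fin d) × ℝ => β₀ p.1 p.2.1 p.2.2)
    (hβ₀bd : ∃ Cβ : ℝ, ∀ z x₂ y, |β₀ z x₂ y| ≤ Cβ)
    (hα : ∀ x₁ : ℝ, x₁ ≠ 0 → ∀ x₂,
      (1 / x₁) * (∫ t in (0:ℝ)..x₁, ρ t x₂) - pmFun ρp ρm x₁ x₂
        = (1 + ‖x₂‖ ^ 2) * α x₁ x₂)
    (hβ₀ : ∀ x₁ : ℝ, x₁ ≠ 0 → ∀ x₂ y,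
      (1 / x₁) * (∫ t in (0:ℝ)..x₁, ρ t x₂ * f t x₂ y) - pmFun ρfp ρfm x₁ x₂ y
        = (1 + ‖x₂‖ ^ 2 + |y| ^ 2) * β₀ x₁ x₂ y)
    -- the corrector
    (V : ℝ → ℝ → EuclideanSpace ℝ (Fin d) → ℝ → ℝ)
    (hV : ∀ ε : ℝ, 0 < ε → ∀ x₁ x₂ y,
      V ε x₁ x₂ y = ∫ s in (0:ℝ)..x₁, ∫ t in (0:ℝ)..s,
        ρ (t / ε) x₂ * (f (t / ε) x₂ y - fbar ρp ρm ρfp ρfm t x₂ y))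
    -- the rescaled remainders
    (βt : ℝ → EuclideanSpace ℝ (Fin d) → ℝ → ℝ)
    (hβtzero : ∀ x₂ y, βt 0 x₂ y = 0)
    (hβt : ∀ z : ℝ, z ≠ 0 → ∀ x₂ y,
      βt z x₂ y = (z ^ 2)⁻¹ * ∫ t in (0:ℝ)..z, t * β₀ t x₂ y)
    (αt : ℝ → EuclideanSpace ℝ (Fin d) → ℝ)
    (hαtzero : ∀ x₂, αt 0 x₂ = 0)
    (hαt : ∀ z : ℝ, z ≠ 0 → ∀ x₂,
      αt z x₂ = (z ^ 2)⁻¹ * ∫ t in (0:ℝ)..z, t * α t x₂) :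
    (∀ ε : ℝ, 0 < ε → ∀ x₁ : ℝ, x₁ ≠ 0 → ∀ x₂ y,
      V ε x₁ x₂ y
        = x₁ ^ 2 * (1 + ‖x₂‖ ^ 2 + |y| ^ 2) * βt (x₁ / ε) x₂ y
          - x₁ ^ 2 * (1 + ‖x₂‖ ^ 2) * fbar ρp ρm ρfp ρfm x₁ x₂ y * αt (x₁ / ε) x₂) ∧
    ((∀ δ : ℝ, 0 < δ → ∃ R : ℝ, ∀ z : ℝ, R ≤ |z| → ∀ x₂, |α z x₂| ≤ δ) →
     (∀ δ : ℝ, 0 < δ → ∃ R : ℝ, ∀ z : ℝ, R ≤ |z| → ∀ x₂ y, |β₀ z x₂ y| ≤ δ) →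
      ((∃ C : ℝ, ∀ z x₂, |αt z x₂| ≤ C) ∧
       (∃ C : ℝ, ∀ z x₂ y, |βt z x₂ y| ≤ C) ∧
       (∀ δ : ℝ, 0 < δ → ∃ R : ℝ, ∀ z : ℝ, R ≤ |z| → ∀ x₂, |αt z x₂| ≤ δ) ∧
       (∀ δ : ℝ, 0 < δ → ∃ R : ℝ, ∀ z : ℝ, R ≤ |z| → ∀ x₂ y, |βt z x₂ y| ≤ δ))) := by
  obtain ⟨Cf, hCf⟩ := hfbd
  obtain ⟨Cα, hCα⟩ := hαbd
  obtain ⟨Cβ, hCβ⟩ := hβ₀bd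
  refine ⟨?_, ?_⟩
  · intro ε hε x hx x₂ y
    have mρ : Measurable fun t => ρ t x₂ := hρmeas.comp (measurable_id.prodMk measurable_const)
    have mf : Measurable fun t => f t x₂ y :=
      hfmeas.comp (measurable_id.prodMk (measurable_const (a := (x₂, y))))
    have mα : Measurable fun t => α t x₂ := hαmeas.comp (measurable_id.prodMk measurable_const)
    have mβ : Measurable fun t => β₀ t x₂ y :=
      hβ₀meas.comp (measurable_id.prodMk (measurable_const (a := (x₂, y))))
    have md : Measurable fun t : ℝ => t / ε := measurable_id.div_const ε
    have bρ : ∀ t, |ρ t x₂| ≤ c₂ := fun t => by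
      rw [abs_of_pos (hc₁.trans_le (hρbd t x₂).1)]; exact (hρbd t x₂).2
    have bρf : ∀ t, |ρ t x₂ * f t x₂ y| ≤ c₂ * Cf := fun t => by
      rw [abs_mul]
      exact mul_le_mul (bρ t) (hCf _ _ _) (abs_nonneg _) ((abs_nonneg _).trans (bρ t))
    set F := fbar ρp ρm ρfp ρfm x x₂ y with hF
    have hFt : ∀ t, (0 < t ↔ 0 < x) → fbar ρp ρm ρfp ρfm t x₂ y = F := fun t ht => by
      rw [hF, fbar, fbar, pm_congr ρfp ρfm ht, pm_congr ρp ρm ht]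
    have hpos : pmFun ρp ρm x x₂ ≠ 0 := by
      unfold pmFun
      split_ifs
      · exact (hc₁.trans_le (hρp x₂)).ne'
      · exact (hc₁.trans_le (hρm x₂)).ne'
    have hFρ : F * pmFun ρp ρm x x₂ = pmFun ρfp ρfm x x₂ y := by
      rw [hF, fbar, div_mul_cancel₀ _ hpos]
    have inner : ∀ s ∈ Set.uIoc 0 x, (∫ t in (0:ℝ)..s,
        ρ (t / ε) x₂ * (f (t / ε) x₂ y - fbar ρp ρm ρfp ρfm t x₂ y))
        = (1 + ‖x₂‖ ^ 2 + |y| ^ 2) * (s * β₀ (s / ε) x₂ y)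
          - (1 + ‖x₂‖ ^ 2) * F * (s * α (s / ε) x₂) := by
      intro s hs
      rcases eq_or_ne s 0 with rfl | hs0
      · simp
      have hsx := aux_sign hs
      have e1 : (∫ t in (0:ℝ)..s,
          ρ (t / ε) x₂ * (f (t / ε) x₂ y - fbar ρp ρm ρfp ρfm t x₂ y))
          = ∫ t in (0:ℝ)..s, (ρ (t / ε) x₂ * f (t / ε) x₂ y - F * ρ (t / ε) x₂) := by
        apply intervalIntegral.integral_congr_ae
        refine Filter.Eventually.of_forall fun t ht => ?_
        rw [hFt t ((aux_sign ht).trans hsx)]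
        ring
      rw [e1, intervalIntegral.integral_sub
        (aux_ii (fun t => ρ (t / ε) x₂ * f (t / ε) x₂ y) ((mρ.mul mf).comp md) (c₂ * Cf) (fun t => bρf _) _ _)
        ((aux_ii (fun t => ρ (t / ε) x₂) (mρ.comp md) c₂ (fun t => bρ _) _ _).const_mul F),
        intervalIntegral.integral_const_mul,
        intervalIntegral.integral_comp_div (fun t => ρ t x₂ * f t x₂ y) hε.ne',
        intervalIntegral.integral_comp_div (fun t => ρ t x₂) hε.ne', zero_div, smul_eq_mul,
        smul_eq_mul]
      have hse : s / ε ≠ 0 := div_ne_zero hs0 hε.ne'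
      have hsgn : 0 < s / ε ↔ 0 < x := by
        rw [← hsx]; exact div_pos_iff_of_pos_right hε
      have ha := hα (s / ε) hse x₂
      have hb := hβ₀ (s / ε) hse x₂ y
      rw [pm_congr _ _ hsgn] at ha hb
      rw [← hFρ] at hb
      generalize (∫ t in (0:ℝ)..(s / ε), ρ t x₂) = I at *
      generalize (∫ t in (0:ℝ)..(s / ε), ρ t x₂ * f t x₂ y) = J at *
      have : ε * J - F * (ε * I) = s * (1 / (s / ε) * J - F * (1 / (s / ε) * I)) := by
        field_simp
      rw [this]
      linear_combination s * hb - s * F * ha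
    rw [hV ε hε, intervalIntegral.integral_congr_ae (Filter.Eventually.of_forall inner)]
    have iβ := (aux_ii (fun t => β₀ (t / ε) x₂ y) (mβ.comp md) Cβ (fun t => hCβ _ _ _) 0 x).continuousOn_mul
      (g := fun t => t) continuousOn_id
    have iα := (aux_ii (fun t => α (t / ε) x₂) (mα.comp md) Cα (fun t => hCα _ _) 0 x).continuousOn_mul
      (g := fun t => t) continuousOn_id
    have hxe : x / ε ≠ 0 := div_ne_zero hx hε.ne'
    rw [intervalIntegral.integral_sub (iβ.const_mul _) (iα.const_mul _),
      intervalIntegral.integral_const_mul, intervalIntegral.integral_const_mul,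
      aux_scale (fun t => β₀ t x₂ y) ε x hε hx, aux_scale (fun t => α t x₂) ε x hε hx,
      ← hβt _ hxe, ← hαt _ hxe]
    ring
  · intro dα dβ
    refine ⟨⟨Cα, fun z x₂ => ?_⟩, ⟨Cβ, fun z x₂ y => ?_⟩, fun δ hδ => ?_, fun δ hδ => ?_⟩
    · rcases eq_or_ne z 0 with rfl | hz
      · rw [hαtzero, abs_zero]; exact (abs_nonneg _).trans (hCα 0 x₂)
      · rw [hαt z hz]; exact aux_bd _ _ (fun t => hCα t x₂) z hz
    · rcases eq_or_ne z 0 with rfl | hz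
      · rw [hβtzero, abs_zero]; exact (abs_nonneg _).trans (hCβ 0 x₂ y)
      · rw [hβt z hz]; exact aux_bd _ _ (fun t => hCβ t x₂ y) z hz
    · obtain ⟨R, hR⟩ := dα (δ / 2) (by positivity)
      obtain ⟨R', h⟩ := aux_decay Cα δ R hδ
      refine ⟨R', fun z hz x₂ => ?_⟩
      obtain ⟨hz0, hb⟩ := h (fun t => α t x₂) (fun t => hCα t x₂) (fun t ht => hR t ht x₂) z hz
      rw [hαt z hz0]; exact hb
    · obtain ⟨R, hR⟩ := dβ (δ / 2) (by positivity)
      obtain ⟨R', h⟩ := aux_decay Cβ δ R hδ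
      refine ⟨R', fun z hz x₂ y => ?_⟩
      obtain ⟨hz0, hb⟩ := h (fun t => β₀ t x₂ y) (fun t => hCβ t x₂ y)
        (fun t ht => hR t ht x₂ y) z hz
      rw [hβt z hz0]; exact hb
end

section
/- Let d≥1, B_α,B_β≥0, c₀≥0, M>0. Let α:ℝ×ℝ^d→ℝ and β:ℝ×ℝ^d×ℝ→ℝ be measurable with |α|≤B_α and |β|≤B_β, and set s_α(r) := sup_{|z|≥r, x₂∈ℝ^d}|α(z,x₂)| and s_β(r) := sup_{|z|≥r, x₂∈ℝ^d, y∈ℝ}|β(z,x₂,y)|, and assume s_α(r)→0 and s_β(r)→0 as r→∞. For each ε∈(0,1] let V^ε:ℝ×ℝ^d×ℝ→ℝ be measurable with |V^ε(x₁,x₂,y)| ≤ x₁²(1+|x₂|²+|y|²)(|β(x₁/ε,x₂,y)| + c₀|α(x₁/ε,x₂)|) for all (x₁,x₂,y), and let (ξ₁^ε,ξ₂^ε,η^ε) be random variables with values in ℝ×ℝ^d×ℝ satisfying E[|ξ₁^ε|⁴] ≤ M and E[(1+|ξ₂^ε|²+|η^ε|²)²] ≤ M. Then for every ε∈(0,1],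 E|V^ε(ξ₁^ε,ξ₂^ε,η^ε)| ≤ √M(B_β + c₀B_α)·ε + M·(s_β(ε^{−1/2}) + c₀ s_α(ε^{−1/2})); in particular E|V^ε(ξ₁^ε,ξ₂^ε,η^ε)| → 0 as ε→0⁺. -/
open MeasureTheory Filter Topology

theorem stmt_10 {Ω : Type*} [MeasurableSpace Ω] (P : Measure Ω) [IsProbabilityMeasure P]
    (d : ℕ) (hd : 1 ≤ d) (Bα Bβ c₀ M : ℝ)
    (hBα : 0 ≤ Bα) (hBβ : 0 ≤ Bβ) (hc₀ : 0 ≤ c₀) (hM : 0 < M)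
    (α : ℝ → EuclideanSpace ℝ (Fin d) → ℝ)
    (β : ℝ → EuclideanSpace ℝ (Fin d) → ℝ → ℝ)
    (hαmeas : Measurable fun p : ℝ × EuclideanSpace ℝ (Fin d) => α p.1 p.2)
    (hβmeas : Measurable fun p : ℝ × EuclideanSpace ℝ (Fin d) × ℝ => β p.1 p.2.1 p.2.2)
    (hαbd : ∀ z x₂, |α z x₂| ≤ Bα)
    (hβbd : ∀ z x₂ y, |β z x₂ y| ≤ Bβ)
    (sα sβ : ℝ → ℝ)
    (hsα : ∀ r : ℝ, sα r = ⨆ z : ℝ, ⨆ x₂ : EuclideanSpace ℝ (Fin d),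
      ⨆ _ : r ≤ |z|, |α z x₂|)
    (hsβ : ∀ r : ℝ, sβ r = ⨆ z : ℝ, ⨆ x₂ : EuclideanSpace ℝ (Fin d), ⨆ y : ℝ,
      ⨆ _ : r ≤ |z|, |β z x₂ y|)
    (hsαlim : Tendsto sα atTop (𝓝 0)) (hsβlim : Tendsto sβ atTop (𝓝 0))
    (V : ℝ → ℝ → EuclideanSpace ℝ (Fin d) → ℝ → ℝ)
    (hVmeas : ∀ ε : ℝ, 0 < ε → ε ≤ 1 →
      Measurable fun p : ℝ × EuclideanSpace ℝ (Fin d) × ℝ => V ε p.1 p.2.1 p.2.2)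
    (hVbd : ∀ ε : ℝ, 0 < ε → ε ≤ 1 → ∀ x₁ x₂ y,
      |V ε x₁ x₂ y| ≤ x₁ ^ 2 * (1 + ‖x₂‖ ^ 2 + |y| ^ 2)
        * (|β (x₁ / ε) x₂ y| + c₀ * |α (x₁ / ε) x₂|))
    (ξ₁ : ℝ → Ω → ℝ) (ξ₂ : ℝ → Ω → EuclideanSpace ℝ (Fin d)) (η : ℝ → Ω → ℝ)
    (hξ₁meas : ∀ ε : ℝ, 0 < ε → ε ≤ 1 → Measurable (ξ₁ ε))
    (hξ₂meas : ∀ ε : ℝ, 0 < ε → ε ≤ 1 → Measurable (ξ₂ ε))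
    (hηmeas : ∀ ε : ℝ, 0 < ε → ε ≤ 1 → Measurable (η ε))
    (hξ₁int : ∀ ε : ℝ, 0 < ε → ε ≤ 1 → Integrable (fun ω => |ξ₁ ε ω| ^ 4) P)
    (hξ₁bd : ∀ ε : ℝ, 0 < ε → ε ≤ 1 → ∫ ω, |ξ₁ ε ω| ^ 4 ∂P ≤ M)
    (hmomint : ∀ ε : ℝ, 0 < ε → ε ≤ 1 →
      Integrable (fun ω => (1 + ‖ξ₂ ε ω‖ ^ 2 + |η ε ω| ^ 2) ^ 2) P)
    (hmombd : ∀ ε : ℝ, 0 < ε → ε ≤ 1 →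
      ∫ ω, (1 + ‖ξ₂ ε ω‖ ^ 2 + |η ε ω| ^ 2) ^ 2 ∂P ≤ M) :
    (∀ ε : ℝ, 0 < ε → ε ≤ 1 →
      ∫ ω, |V ε (ξ₁ ε ω) (ξ₂ ε ω) (η ε ω)| ∂P
        ≤ Real.sqrt M * (Bβ + c₀ * Bα) * ε
          + M * (sβ ((Real.sqrt ε)⁻¹) + c₀ * sα ((Real.sqrt ε)⁻¹))) ∧
    Tendsto (fun ε => ∫ ω, |V ε (ξ₁ ε ω) (ξ₂ ε ω) (η ε ω)| ∂P) (𝓝[>] (0:ℝ)) (𝓝 0) := by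
  have hα0 : ∀ r, 0 ≤ sα r := fun r => by
    rw [hsα]
    exact Real.iSup_nonneg fun z => Real.iSup_nonneg fun x => Real.iSup_nonneg fun _ => abs_nonneg _
  have hβ0 : ∀ r, 0 ≤ sβ r := fun r => by
    rw [hsβ]
    exact Real.iSup_nonneg fun z => Real.iSup_nonneg fun x => Real.iSup_nonneg fun y =>
      Real.iSup_nonneg fun _ => abs_nonneg _
  have hαs : ∀ r z x, r ≤ |z| → |α z x| ≤ sα r := by
    intro r z x hr
    rw [hsα]
    have b1 : ∀ z x, (⨆ _ : r ≤ |z|, |α z x|) ≤ Bα := fun z x =>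
      Real.iSup_le (fun _ => hαbd z x) hBα
    have b2 : ∀ z, (⨆ x, ⨆ _ : r ≤ |z|, |α z x|) ≤ Bα := fun z => Real.iSup_le (b1 z) hBα
    calc |α z x| = ⨆ _ : r ≤ |z|, |α z x| := by simp [hr]
      _ ≤ ⨆ x, ⨆ _ : r ≤ |z|, |α z x| :=
        le_ciSup (f := fun x => ⨆ _ : r ≤ |z|, |α z x|)
          ⟨Bα, by rintro _ ⟨x, rfl⟩; exact b1 z x⟩ x
      _ ≤ _ := le_ciSup (f := fun z => ⨆ x, ⨆ _ : r ≤ |z|, |α z x|)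
          ⟨Bα, by rintro _ ⟨z, rfl⟩; exact b2 z⟩ z
  have hβs : ∀ r z x y, r ≤ |z| → |β z x y| ≤ sβ r := by
    intro r z x y hr
    rw [hsβ]
    have b1 : ∀ z x y, (⨆ _ : r ≤ |z|, |β z x y|) ≤ Bβ := fun z x y =>
      Real.iSup_le (fun _ => hβbd z x y) hBβ
    have b2 : ∀ z x, (⨆ y, ⨆ _ : r ≤ |z|, |β z x y|) ≤ Bβ := fun z x =>
      Real.iSup_le (b1 z x) hBβ
    have b3 : ∀ z, (⨆ x, ⨆ y, ⨆ _ : r ≤ |z|, |β z x y|) ≤ Bβ := fun z =>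
      Real.iSup_le (b2 z) hBβ
    calc |β z x y| = ⨆ _ : r ≤ |z|, |β z x y| := by simp [hr]
      _ ≤ ⨆ y, ⨆ _ : r ≤ |z|, |β z x y| :=
        le_ciSup (f := fun y => ⨆ _ : r ≤ |z|, |β z x y|)
          ⟨Bβ, by rintro _ ⟨y, rfl⟩; exact b1 z x y⟩ y
      _ ≤ ⨆ x, ⨆ y, ⨆ _ : r ≤ |z|, |β z x y| :=
        le_ciSup (f := fun x => ⨆ y, ⨆ _ : r ≤ |z|, |β z x y|)
          ⟨Bβ, by rintro _ ⟨x, rfl⟩; exact b2 z x⟩ x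
      _ ≤ _ := le_ciSup (f := fun z => ⨆ x, ⨆ y, ⨆ _ : r ≤ |z|, |β z x y|)
          ⟨Bβ, by rintro _ ⟨z, rfl⟩; exact b3 z⟩ z
  have main : ∀ ε : ℝ, 0 < ε → ε ≤ 1 →
      ∫ ω, |V ε (ξ₁ ε ω) (ξ₂ ε ω) (η ε ω)| ∂P
        ≤ Real.sqrt M * (Bβ + c₀ * Bα) * ε
          + M * (sβ ((Real.sqrt ε)⁻¹) + c₀ * sα ((Real.sqrt ε)⁻¹)) := by
    intro ε h0 h1
    have hm0 : 0 < Real.sqrt M := Real.sqrt_pos.2 hM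
    have hmm : Real.sqrt M * Real.sqrt M = M := Real.mul_self_sqrt hM.le
    have he0 : 0 < Real.sqrt ε := Real.sqrt_pos.2 h0
    have hee : Real.sqrt ε * Real.sqrt ε = ε := Real.mul_self_sqrt h0.le
    have hK : 0 ≤ Bβ + c₀ * Bα := by positivity
    have hS : 0 ≤ sβ ((Real.sqrt ε)⁻¹) + c₀ * sα ((Real.sqrt ε)⁻¹) :=
      add_nonneg (hβ0 _) (mul_nonneg hc₀ (hα0 _))
    set K := Bβ + c₀ * Bα
    set S := sβ ((Real.sqrt ε)⁻¹) + c₀ * sα ((Real.sqrt ε)⁻¹)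
    set m := Real.sqrt M
    have i1 := hξ₁int ε h0 h1
    have i2 := hmomint ε h0 h1
    have j1 := hξ₁bd ε h0 h1
    have j2 := hmombd ε h0 h1
    have pt : ∀ ω, |V ε (ξ₁ ε ω) (ξ₂ ε ω) (η ε ω)| ≤
        (ε * K / 2 * m + (ε * K / (2 * m) + S / 2) * (1 + ‖ξ₂ ε ω‖ ^ 2 + |η ε ω| ^ 2) ^ 2)
          + S / 2 * |ξ₁ ε ω| ^ 4 := by
      intro ω
      refine (hVbd ε h0 h1 _ _ _).trans ?_
      have hW : 0 ≤ 1 + ‖ξ₂ ε ω‖ ^ 2 + |η ε ω| ^ 2 := by positivity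
      set W := 1 + ‖ξ₂ ε ω‖ ^ 2 + |η ε ω| ^ 2
      set x := ξ₁ ε ω
      have hx4 : |x| ^ 4 = (x ^ 2) ^ 2 := by rw [← sq_abs x]; ring
      rw [hx4]
      have a1 : W ≤ m / 2 + W ^ 2 / (2 * m) := by
        have : m / 2 + W ^ 2 / (2 * m) - W = (W - m) ^ 2 / (2 * m) := by field_simp; ring
        have : 0 ≤ (W - m) ^ 2 / (2 * m) := by positivity
        linarith
      have a2 : x ^ 2 * W ≤ W ^ 2 / 2 + (x ^ 2) ^ 2 / 2 := by nlinarith [sq_nonneg (x ^ 2 - W)]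
      have a3 := mul_le_mul_of_nonneg_left a1 (mul_nonneg h0.le hK)
      have a4 := mul_le_mul_of_nonneg_left a2 hS
      have e : (ε * K / 2 * m + (ε * K / (2 * m) + S / 2) * W ^ 2) + S / 2 * (x ^ 2) ^ 2
          = ε * K * (m / 2 + W ^ 2 / (2 * m)) + S * (W ^ 2 / 2 + (x ^ 2) ^ 2 / 2) := by
        field_simp
        ring
      rw [e]
      refine le_trans ?_ (add_le_add a3 a4)
      have hxW : 0 ≤ x ^ 2 * W := by positivity
      rcases lt_or_ge |x| (Real.sqrt ε) with hx | hx
      · have hx2 : x ^ 2 ≤ ε := by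
          rw [← sq_abs x, ← hee, sq]
          exact mul_le_mul hx.le hx.le (abs_nonneg _) he0.le
        have q : |β (x / ε) (ξ₂ ε ω) (η ε ω)| + c₀ * |α (x / ε) (ξ₂ ε ω)| ≤ K :=
          add_le_add (hβbd _ _ _) (mul_le_mul_of_nonneg_left (hαbd _ _) hc₀)
        have q1 := mul_le_mul_of_nonneg_left q hxW
        have q2 := mul_le_mul_of_nonneg_right hx2 (mul_nonneg hW hK)
        have q3 := mul_nonneg hS hxW
        linarith
      · have hr : (Real.sqrt ε)⁻¹ ≤ |x / ε| := by
          rw [abs_div, abs_of_pos h0, le_div_iff₀ h0]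
          calc (Real.sqrt ε)⁻¹ * ε = (Real.sqrt ε)⁻¹ * (Real.sqrt ε * Real.sqrt ε) := by rw [hee]
            _ = Real.sqrt ε := by field_simp
            _ ≤ _ := hx
        have q : |β (x / ε) (ξ₂ ε ω) (η ε ω)| + c₀ * |α (x / ε) (ξ₂ ε ω)| ≤ S :=
          add_le_add (hβs _ _ _ _ hr) (mul_le_mul_of_nonneg_left (hαs _ _ _ hr) hc₀)
        have q1 := mul_le_mul_of_nonneg_left q hxW
        have q3 := mul_nonneg (mul_nonneg h0.le hK) hW
        linarith
    have ic : Integrable (fun _ : Ω => ε * K / 2 * m) P := integrable_const _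
    have i2' := i2.const_mul (ε * K / (2 * m) + S / 2)
    have i1' := i1.const_mul (S / 2)
    have h := integral_mono_of_nonneg (μ := P) (Eventually.of_forall fun ω => abs_nonneg _)
      ((ic.add i2').add i1') (Eventually.of_forall pt)
    refine h.trans ?_
    rw [integral_add' (ic.add i2') i1', integral_add' ic i2', integral_const,
      integral_const_mul, integral_const_mul]
    simp only [probReal_univ, one_smul]
    have c1 := mul_le_mul_of_nonneg_left j2
      (show 0 ≤ ε * K / (2 * m) + S / 2 by positivity)
    have c2 := mul_le_mul_of_nonneg_left j1 (show 0 ≤ S / 2 by positivity)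
    have c3 : ε * K / (2 * m) * M = ε * K / 2 * m := by
      rw [← hmm]; field_simp
    have c4 : (ε * K / (2 * m) + S / 2) * M = ε * K / 2 * m + S / 2 * M := by
      rw [add_mul, c3]
    linarith
  refine ⟨main, ?_⟩
  have t0 : Tendsto (fun ε : ℝ => (Real.sqrt ε)⁻¹) (𝓝[>] 0) atTop := by
    refine tendsto_inv_nhdsGT_zero.comp ?_
    refine tendsto_nhdsWithin_iff.2 ⟨?_, ?_⟩
    · have := Real.continuous_sqrt.tendsto 0
      rw [Real.sqrt_zero] at this
      exact this.mono_left nhdsWithin_le_nhds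
    · filter_upwards [self_mem_nhdsWithin] with ε hε
      exact Real.sqrt_pos.2 hε
  have t1 : Tendsto (fun ε : ℝ => ε) (𝓝[>] (0:ℝ)) (𝓝 0) := nhdsWithin_le_nhds
  have t2 := (t1.const_mul (Real.sqrt M * (Bβ + c₀ * Bα))).add
    (((hsβlim.comp t0).add ((hsαlim.comp t0).const_mul c₀)).const_mul M)
  simp only [mul_zero, add_zero] at t2
  refine tendsto_of_tendsto_of_tendsto_of_le_of_le' tendsto_const_nhds t2
    (Eventually.of_forall fun ε => integral_nonneg fun ω => abs_nonneg _) ?_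
  filter_upwards [Ioc_mem_nhdsGT (zero_lt_one (α := ℝ))] with ε hε
  exact main ε hε.1 hε.2
end
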